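/- arXiv:1407.3594 — 2 statements merged into one kernel-verified Lean document; each statement's English description precedes it below -/
import Mathlib

section
/- Let V be a finite-dimensional real vector space and J : V → V a linear map with J ∘ J = −id. Then the derivation action D_J on symmetric trilinear forms satisfies D_J⁴ T + 10·D_J² T + 9·T = 0 for every symmetric trilinear form T on V; equivalently, the only eigenvalues of the complexification of D_J on symmetric trilinear forms are 3i, i, −i and −3i. -/
/-!
`D_J` is a sum of three commuting operators, "insert `J` in slot `i`", each of which squares to `-1`.
Each operator has complex eigenvalues `± i`, so `D_J` can only have the eigenvalues `± i` and `± 3i`,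
and its minimal polynomial divides `(X² + 1)(X² + 9) = X⁴ + 10 X² + 9`. The identity is verified by
expanding `D_J` slotwise (`derTrilin_apply_vec`) and using `J (J x) = -x` and trilinearity to
reduce every term to a value of `T` at arguments in which each slot carries at most one `J`.
-/

/-- The derivation action of a linear map `J` on trilinear forms (realized as
multilinear maps on three copies of `V`):
`(D_J T)(x,y,z) = T(Jx,y,z) + T(x,Jy,z) + T(x,y,Jz)`. -/
noncomputable def derTrilin {V : Type*} [AddCommGroup V] [Module ℝ V]
    (J : V →ₗ[ℝ] V) (T : MultilinearMap ℝ (fun _ : Fin 3 => V) ℝ) :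
    MultilinearMap ℝ (fun _ : Fin 3 => V) ℝ :=
  ∑ i : Fin 3, T.compLinearMap (Function.update (fun _ : Fin 3 => (LinearMap.id : V →ₗ[ℝ] V)) i J)

theorem derTrilin_apply_vec {V : Type*} [AddCommGroup V] [Module ℝ V]
    (J : V →ₗ[ℝ] V) (T : MultilinearMap ℝ (fun _ : Fin 3 => V) ℝ) (x y z : V) :
    derTrilin J T ![x, y, z] = T ![J x, y, z] + T ![x, J y, z] + T ![x, y, J z] := by
  rw [derTrilin, Fin.sum_univ_three, add_apply, add_apply]
  simp only [MultilinearMap.compLinearMap_apply]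
  congr 1
  · congr 1 <;> congr 1 <;> ext i <;> fin_cases i <;> simp
  · congr 1
    ext i
    fin_cases i <;> simp

theorem trilin_neg_fst {V : Type*} [AddCommGroup V] [Module ℝ V]
    (T : MultilinearMap ℝ (fun _ : Fin 3 => V) ℝ) (x y z : V) :
    T ![-x, y, z] = -T ![x, y, z] := by
  have h := T.map_update_neg ![x, y, z] 0 x
  rw [show Function.update ![x, y, z] 0 x = ![x, y, z] from
    Function.update_eq_self_iff.2 rfl] at h
  rw [← h]
  congr 1
  ext i
  fin_cases i <;> rfl

theorem trilin_neg_snd {V : Type*} [AddCommGroup V] [Module ℝ V]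
    (T : MultilinearMap ℝ (fun _ : Fin 3 => V) ℝ) (x y z : V) :
    T ![x, -y, z] = -T ![x, y, z] := by
  have h := T.map_update_neg ![x, y, z] 1 y
  rw [show Function.update ![x, y, z] 1 y = ![x, y, z] from
    Function.update_eq_self_iff.2 rfl] at h
  rw [← h]
  congr 1
  ext i
  fin_cases i <;> rfl

theorem trilin_neg_trd {V : Type*} [AddCommGroup V] [Module ℝ V]
    (T : MultilinearMap ℝ (fun _ : Fin 3 => V) ℝ) (x y z : V) :
    T ![x, y, -z] = -T ![x, y, z] := by
  have h := T.map_update_neg ![x, y, z] 2 z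
  rw [show Function.update ![x, y, z] 2 z = ![x, y, z] from
    Function.update_eq_self_iff.2 rfl] at h
  rw [← h]
  congr 1
  ext i
  fin_cases i <;> rfl

/-- If `J ∘ J = -id` on a finite-dimensional real vector space `V`,
then the derivation `D_J` on symmetric trilinear forms satisfies
`D_J⁴ T + 10 • D_J² T + 9 • T = 0`. -/
theorem derTrilin_quartic_identity
    (V : Type*) [AddCommGroup V] [Module ℝ V] [FiniteDimensional ℝ V]
    (J : V →ₗ[ℝ] V) (hJ : J ∘ₗ J = -LinearMap.id)
    (T : MultilinearMap ℝ (fun _ : Fin 3 => V) ℝ)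
    (hT : ∀ (σ : Equiv.Perm (Fin 3)) (v : Fin 3 → V), T (v ∘ σ) = T v) :
    derTrilin J (derTrilin J (derTrilin J (derTrilin J T)))
      + (10 : ℝ) • derTrilin J (derTrilin J T) + (9 : ℝ) • T = 0 := by
  have hJJ : ∀ x, J (J x) = -x := fun x => by
    simpa using LinearMap.congr_fun hJ x
  ext v
  have hv : v = ![v 0, v 1, v 2] := by
    ext i
    fin_cases i <;> rfl
  rw [hv]
  simp only [add_apply, smul_apply, zero_apply,
    derTrilin_apply_vec, hJJ, trilin_neg_fst, trilin_neg_snd, trilin_neg_trd, smul_eq_mul]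
  ring
end

section
/- Let H : ℝⁿ × ℝ → ℝ be a smooth (C^∞) function of the variables (x¹,…,xⁿ,u) such that for all i,j,k,l ∈ {1,…,n}: ∂⁴H/∂xⁱ∂xʲ∂xᵏ∂xˡ ≡ 0 and ∂⁴H/∂xⁱ∂xʲ∂xᵏ∂u ≡ 0, and such that for all i,j the function 2·∂⁴H/∂xⁱ∂xʲ∂u∂u − Σ_{k=1}^n (∂H/∂xᵏ)·(∂³H/∂xⁱ∂xʲ∂xᵏ) has all of its first-order partial derivatives (in x¹,…,xⁿ and in u) identically zero. Then there exist symmetric real n×n matrices (H₂)_{ij}, (H₁)_{ij}, (H₀)_{ij} and smooth functions G_i, K : ℝ → ℝ such that H(x,u) = Σ_{i,j} ((H₂)_{ij}u² + (H₁)_{ij}u + (H₀)_{ij}) xⁱxʲ + Σ_i G_i(u) xⁱ + K(u) for all (x,u) ∈ ℝⁿ × ℝ. In particular, the purely cubic part of H in the x-variables vanishes and the quadratic coefficients are quadratic polynomials in u. -/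
/-!
The third `x`-derivatives `T i j k` of `H` are constant, because all their first partial derivatives
vanish. Differentiating the obstruction along `xˡ` removes its leading term `2 ∂ᵤ²∂ᵢ∂ⱼH` and leaves
`∑ k, ∂ₗ∂ₖH * T i j k = 0`; a further derivative along `xᵐ` gives `∑ k, T l m k * T i j k = 0`.
For `(l, m) = (i, j)` this is a vanishing sum of squares, so `T = 0`
(`third_xderiv_eq_zero`).

Hence the Hessian `∂ᵢ∂ⱼH` depends on `u` alone, and the obstruction reduces to `2 ∂ᵤ²∂ᵢ∂ⱼH`, whose
`u`-derivative vanishes, so `∂ᵢ∂ⱼH` is a quadratic polynomial in `u`. The normal form is then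
the exact second-order Taylor expansion of `t ↦ H (t x, u)` at `t = 0`, evaluated at `t = 1`. Both
expansions come from `quadratic_of_hasDerivAt`.
-/


/-- The partial derivative of `f : ℝⁿ × ℝ → ℝ` in the direction `v`. -/
noncomputable def pderiv {n : ℕ} (v : (Fin n → ℝ) × ℝ)
    (f : (Fin n → ℝ) × ℝ → ℝ) : (Fin n → ℝ) × ℝ → ℝ :=
  fun z => fderiv ℝ f z v

/-- The coordinate direction `∂/∂xⁱ` on `ℝⁿ × ℝ`. -/
noncomputable def xdir {n : ℕ} (i : Fin n) : (Fin n → ℝ) × ℝ := (Pi.single i 1, 0)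

/-- The coordinate direction `∂/∂u` on `ℝⁿ × ℝ`. -/
noncomputable def udir {n : ℕ} : (Fin n → ℝ) × ℝ := (0, 1)

/-- The function `2·∂⁴H/∂xⁱ∂xʲ∂u∂u − Σ_k (∂H/∂xᵏ)·(∂³H/∂xⁱ∂xʲ∂xᵏ)` occurring in
the third-order symmetry condition `∇³R = 0` for a pp-wave with profile `H`. -/
noncomputable def ppwaveObstruction {n : ℕ} (H : (Fin n → ℝ) × ℝ → ℝ)
    (i j : Fin n) : (Fin n → ℝ) × ℝ → ℝ :=
  fun z => 2 * pderiv udir (pderiv udir (pderiv (xdir j) (pderiv (xdir i) H))) z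
    - ∑ k : Fin n,
        pderiv (xdir k) H z * pderiv (xdir k) (pderiv (xdir j) (pderiv (xdir i) H)) z

section Calculus

variable {n : ℕ} {f : (Fin n → ℝ) × ℝ → ℝ}

lemma pderiv_contDiff (hf : ContDiff ℝ (⊤ : ℕ∞) f) (v : (Fin n → ℝ) × ℝ) :
    ContDiff ℝ (⊤ : ℕ∞) (pderiv v f) :=
  (hf.fderiv_right (m := (⊤ : ℕ∞)) (by simp)).clm_apply contDiff_const

lemma smooth_differentiable (hf : ContDiff ℝ (⊤ : ℕ∞) f) : Differentiable ℝ f :=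
  hf.differentiable (by simp)

lemma pderiv_comm (hf : ContDiff ℝ (⊤ : ℕ∞) f) (v w : (Fin n → ℝ) × ℝ) :
    pderiv v (pderiv w f) = pderiv w (pderiv v f) := by
  have hd : Differentiable ℝ (fderiv ℝ f) :=
    (hf.fderiv_right (m := (⊤ : ℕ∞)) (by simp)).differentiable (by simp)
  have key : ∀ (a b : (Fin n → ℝ) × ℝ) z,
      pderiv a (pderiv b f) z = fderiv ℝ (fderiv ℝ f) z a b := by
    intro a b z
    unfold pderiv
    rw [fderiv_clm_apply (hd z) (differentiableAt_const b)]
    simp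
  funext z
  rw [key, key]
  refine hf.contDiffAt.isSymmSndFDerivAt ?_ v w
  rw [minSmoothness_of_isRCLikeNormedField]
  exact WithTop.coe_le_coe.2 (le_top : (2 : ℕ∞) ≤ ⊤)

lemma pderiv_zero (v : (Fin n → ℝ) × ℝ) :
    pderiv v (0 : (Fin n → ℝ) × ℝ → ℝ) = 0 := by
  funext z
  simp [pderiv]

/-- Leibniz rule for `∑ k, F k * c k` when the factors `c k` are constant along `v`. -/
lemma pderiv_sum_mul {v : (Fin n → ℝ) × ℝ} {F c : Fin n → (Fin n → ℝ) × ℝ → ℝ}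
    (hF : ∀ k, ContDiff ℝ (⊤ : ℕ∞) (F k)) (hc : ∀ k, ContDiff ℝ (⊤ : ℕ∞) (c k))
    (hvc : ∀ k, pderiv v (c k) = 0) (z : (Fin n → ℝ) × ℝ) :
    pderiv v (fun z => ∑ k, F k z * c k z) z = ∑ k, pderiv v (F k) z * c k z := by
  unfold pderiv
  rw [fderiv_fun_sum fun k _ =>
    (smooth_differentiable (hF k) z).fun_mul (smooth_differentiable (hc k) z)]
  simp only [sum_apply]
  refine Finset.sum_congr rfl fun k _ => ?_
  rw [fderiv_fun_mul (smooth_differentiable (hF k) z) (smooth_differentiable (hc k) z)]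
  have h : fderiv ℝ (c k) z v = 0 := congrFun (hvc k) z
  simp [h, mul_comm]

lemma hasDerivAt_ray (hf : ContDiff ℝ (⊤ : ℕ∞) f) (x : Fin n → ℝ) (u t : ℝ) :
    HasDerivAt (fun t : ℝ => f (t • x, u)) (∑ i, x i * pderiv (xdir i) f (t • x, u)) t := by
  have hline : HasDerivAt (fun t : ℝ => (t • x, u)) (x, (0 : ℝ)) t := by
    have h1 : HasDerivAt (fun t : ℝ => t • x) x t := by
      simpa using (hasDerivAt_id t).smul_const x
    exact h1.prodMk (hasDerivAt_const t u)
  have h := (smooth_differentiable hf (t • x, u)).hasFDerivAt.comp_hasDerivAt t hline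
  have hx : (x, (0 : ℝ)) = ∑ i, x i • (xdir i : (Fin n → ℝ) × ℝ) := by
    refine Prod.ext ?_ ?_
    · funext j
      simp [xdir, Prod.fst_sum, Finset.sum_apply, Pi.single_apply]
    · simp [xdir, Prod.snd_sum]
  refine h.congr_deriv ?_
  rw [hx, map_sum]
  simp [pderiv]

lemma hasDerivAt_u (hf : ContDiff ℝ (⊤ : ℕ∞) f) (x : Fin n → ℝ) (u : ℝ) :
    HasDerivAt (fun s : ℝ => f (x, s)) (pderiv udir f (x, u)) u :=
  (smooth_differentiable hf (x, u)).hasFDerivAt.comp_hasDerivAt u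
    ((hasDerivAt_const u x).prodMk (hasDerivAt_id u))

lemma eq_of_xderiv_eq_zero (hf : ContDiff ℝ (⊤ : ℕ∞) f)
    (h : ∀ i, pderiv (xdir i) f = 0) (x : Fin n → ℝ) (u : ℝ) : f (x, u) = f (0, u) := by
  have hd : ∀ t, HasDerivAt (fun t : ℝ => f (t • x, u)) 0 t := fun t => by
    simpa [h] using hasDerivAt_ray hf x u t
  simpa using is_const_of_deriv_eq_zero (fun t => (hd t).differentiableAt)
    (fun t => (hd t).deriv) 1 0

end Calculus

lemma quadratic_of_hasDerivAt {p q : ℝ → ℝ} {c : ℝ} (hp : ∀ t, HasDerivAt p (q t) t)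
    (hq : ∀ t, HasDerivAt q c t) (t : ℝ) : p t = p 0 + q 0 * t + c / 2 * t ^ 2 := by
  have hq' : ∀ t, q t = q 0 + c * t := by
    intro t
    have hd : ∀ t, HasDerivAt (fun t => q t - c * t) 0 t := fun t => by
      simpa using (hq t).fun_sub ((hasDerivAt_id t).const_mul c)
    have := is_const_of_deriv_eq_zero (fun t => (hd t).differentiableAt)
      (fun t => (hd t).deriv) t 0
    simp at this
    linarith
  have hd : ∀ t, HasDerivAt (fun t => p t - (q 0 * t + c / 2 * t ^ 2)) 0 t := fun t => by
    have h := (hp t).sub (((hasDerivAt_id t).const_mul (q 0)).add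
      (((hasDerivAt_id t).pow 2).const_mul (c / 2)))
    refine h.congr_deriv ?_
    rw [hq' t]
    simp
    ring
  have := is_const_of_deriv_eq_zero (fun t => (hd t).differentiableAt)
    (fun t => (hd t).deriv) t 0
  simp at this
  linarith

/-- The cubic part of `H` vanishes: two `x`-derivatives of the obstruction give the identity
`∑ k, (∂ₖ∂ⱼ∂ᵢH)² = 0`. -/
lemma third_xderiv_eq_zero {n : ℕ} {H : (Fin n → ℝ) × ℝ → ℝ} (hH : ContDiff ℝ (⊤ : ℕ∞) H)
    (hxxxx : ∀ i j k l : Fin n,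
      pderiv (xdir l) (pderiv (xdir k) (pderiv (xdir j) (pderiv (xdir i) H))) = 0)
    (hxxxu : ∀ i j k : Fin n,
      pderiv udir (pderiv (xdir k) (pderiv (xdir j) (pderiv (xdir i) H))) = 0)
    (hobsx : ∀ i j l : Fin n, pderiv (xdir l) (ppwaveObstruction H i j) = 0)
    (i j k : Fin n) : pderiv (xdir k) (pderiv (xdir j) (pderiv (xdir i) H)) = 0 := by
  have s1 : ∀ i, ContDiff ℝ (⊤ : ℕ∞) (pderiv (xdir i) H) := fun i => pderiv_contDiff hH _
  have s2 : ∀ i j, ContDiff ℝ (⊤ : ℕ∞) (pderiv (xdir j) (pderiv (xdir i) H)) :=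
    fun i j => pderiv_contDiff (s1 i) _
  have s3 : ∀ k, ContDiff ℝ (⊤ : ℕ∞) (pderiv (xdir k) (pderiv (xdir j) (pderiv (xdir i) H))) :=
    fun k => pderiv_contDiff (s2 i j) _
  have su := pderiv_contDiff (s2 i j) udir
  have suu := pderiv_contDiff su udir
  have hlead : pderiv (xdir i)
      (pderiv udir (pderiv udir (pderiv (xdir j) (pderiv (xdir i) H)))) = 0 := by
    rw [pderiv_comm su, pderiv_comm (s2 i j), hxxxu, pderiv_zero]
  have hfirst : (fun z => ∑ k, pderiv (xdir k) (pderiv (xdir i) H) z *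
      pderiv (xdir k) (pderiv (xdir j) (pderiv (xdir i) H)) z) = 0 := by
    funext z
    have hsum := pderiv_sum_mul (v := xdir i) s1 s3 (fun k => hxxxx i j k i) z
    have hdS : DifferentiableAt ℝ (fun z => ∑ k, pderiv (xdir k) H z *
        pderiv (xdir k) (pderiv (xdir j) (pderiv (xdir i) H)) z) z :=
      DifferentiableAt.fun_sum fun k _ =>
        (smooth_differentiable (s1 k) z).mul (smooth_differentiable (s3 k) z)
    have h0 := congrFun (hobsx i j i) z
    have hl := congrFun hlead z
    unfold ppwaveObstruction at h0
    rw [pderiv, fderiv_fun_sub ((smooth_differentiable suu z).const_mul 2) hdS,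
      fderiv_const_mul (smooth_differentiable suu z)] at h0
    simp only [sub_apply, smul_apply] at h0
    rw [pderiv] at hsum hl
    rw [hsum, hl] at h0
    simp only [fun k => pderiv_comm hH (xdir i) (xdir k)] at h0
    simpa using h0
  funext z
  have hsecond := pderiv_sum_mul (v := xdir j) (fun k => s2 i k) s3
    (fun k => hxxxx i j k j) z
  rw [hfirst, pderiv_zero] at hsecond
  simp only [fun k => pderiv_comm (s1 i) (xdir j) (xdir k)] at hsecond
  have hz := (Finset.sum_eq_zero_iff_of_nonneg (fun k _ => mul_self_nonneg _)).1 hsecond.symm k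
    (Finset.mem_univ k)
  exact mul_self_eq_zero.1 hz

/-- If `H : ℝⁿ × ℝ → ℝ` is smooth, all fourth derivatives
`∂⁴H/∂xⁱ∂xʲ∂xᵏ∂xˡ` and `∂⁴H/∂xⁱ∂xʲ∂xᵏ∂u` vanish, and for all `i,j` the
function `2·∂⁴H/∂xⁱ∂xʲ∂u∂u − Σ_k (∂H/∂xᵏ)·(∂³H/∂xⁱ∂xʲ∂xᵏ)` has all first
partial derivatives zero, then
`H(x,u) = Σ (H₂ᵢⱼu² + H₁ᵢⱼu + H₀ᵢⱼ)xⁱxʲ + Σ Gᵢ(u)xⁱ + K(u)` with symmetric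
matrices `H₂, H₁, H₀` and smooth `Gᵢ, K`; in particular the cubic part of `H`
vanishes and the quadratic coefficients are quadratic polynomials in `u`. -/
theorem third_order_symmetric_ppwave_profile_normal_form
    (n : ℕ) (H : (Fin n → ℝ) × ℝ → ℝ) (hH : ContDiff ℝ (⊤ : ℕ∞) H)
    (hxxxx : ∀ i j k l : Fin n,
      pderiv (xdir l) (pderiv (xdir k) (pderiv (xdir j) (pderiv (xdir i) H))) = 0)
    (hxxxu : ∀ i j k : Fin n,
      pderiv udir (pderiv (xdir k) (pderiv (xdir j) (pderiv (xdir i) H))) = 0)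
    (hobsx : ∀ i j l : Fin n, pderiv (xdir l) (ppwaveObstruction H i j) = 0)
    (hobsu : ∀ i j : Fin n, pderiv udir (ppwaveObstruction H i j) = 0) :
    ∃ (H₂ H₁ H₀ : Fin n → Fin n → ℝ) (G : Fin n → ℝ → ℝ) (K : ℝ → ℝ),
      (∀ i j, H₂ i j = H₂ j i) ∧ (∀ i j, H₁ i j = H₁ j i) ∧
      (∀ i j, H₀ i j = H₀ j i) ∧
      (∀ i, ContDiff ℝ (⊤ : ℕ∞) (G i)) ∧ ContDiff ℝ (⊤ : ℕ∞) K ∧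
      ∀ (x : Fin n → ℝ) (u : ℝ),
        H (x, u) = (∑ i, ∑ j, (H₂ i j * u ^ 2 + H₁ i j * u + H₀ i j) * x i * x j)
          + (∑ i, G i u * x i) + K u := by
  have s1 : ∀ i, ContDiff ℝ (⊤ : ℕ∞) (pderiv (xdir i) H) := fun i => pderiv_contDiff hH _
  have s2 : ∀ i j, ContDiff ℝ (⊤ : ℕ∞) (pderiv (xdir j) (pderiv (xdir i) H)) :=
    fun i j => pderiv_contDiff (s1 i) _
  have su := fun i j => pderiv_contDiff (s2 i j) udir
  have suu := fun i j => pderiv_contDiff (su i j) udir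
  have hT := third_xderiv_eq_zero hH hxxxx hxxxu hobsx
  have hsymm : ∀ i j, pderiv (xdir j) (pderiv (xdir i) H) = pderiv (xdir i) (pderiv (xdir j) H) :=
    fun i j => pderiv_comm hH _ _
  have huuu : ∀ i j, pderiv udir
      (pderiv udir (pderiv udir (pderiv (xdir j) (pderiv (xdir i) H)))) = 0 := by
    intro i j
    funext z
    have h0 := congrFun (hobsu i j) z
    unfold ppwaveObstruction at h0
    simp only [hT, Pi.zero_apply, mul_zero, Finset.sum_const_zero, sub_zero] at h0
    rw [pderiv, fderiv_const_mul (smooth_differentiable (suu i j) z)] at h0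
    simpa [pderiv] using h0
  have hquad : ∀ i j u, pderiv (xdir j) (pderiv (xdir i) H) (0, u) =
      pderiv (xdir j) (pderiv (xdir i) H) (0, 0)
      + pderiv udir (pderiv (xdir j) (pderiv (xdir i) H)) (0, 0) * u
      + pderiv udir (pderiv udir (pderiv (xdir j) (pderiv (xdir i) H))) (0, 0) / 2 * u ^ 2 := by
    intro i j u
    refine quadratic_of_hasDerivAt
      (p := fun u => pderiv (xdir j) (pderiv (xdir i) H) (0, u))
      (fun t => hasDerivAt_u (s2 i j) 0 t) (fun t => ?_) u
    have hd := fun t => hasDerivAt_u (suu i j) 0 t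
    simp only [huuu, Pi.zero_apply] at hd
    have hc := is_const_of_deriv_eq_zero (fun t => (hd t).differentiableAt)
      (fun t => (hd t).deriv) t 0
    have h := hasDerivAt_u (su i j) 0 t
    rwa [hc] at h
  -- The Taylor coefficients carry a factor `1/2` from the expansion in `x`,
  -- and `u ^ 2` a further `1/2` from the expansion in `u`.
  refine ⟨fun i j => pderiv udir (pderiv udir (pderiv (xdir j) (pderiv (xdir i) H))) (0, 0) / 4,
    fun i j => pderiv udir (pderiv (xdir j) (pderiv (xdir i) H)) (0, 0) / 2,
    fun i j => pderiv (xdir j) (pderiv (xdir i) H) (0, 0) / 2,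
    fun i u => pderiv (xdir i) H (0, u), fun u => H (0, u),
    fun i j => by simp only [hsymm i j], fun i j => by simp only [hsymm i j],
    fun i j => by simp only [hsymm i j],
    fun i => (s1 i).comp (contDiff_const.prodMk contDiff_id),
    hH.comp (contDiff_const.prodMk contDiff_id), fun x u => ?_⟩
  have hq : ∀ t, HasDerivAt (fun t : ℝ => ∑ i, x i * pderiv (xdir i) H (t • x, u))
      (∑ i, x i * ∑ j, x j * pderiv (xdir j) (pderiv (xdir i) H) (0, u)) t := by
    intro t
    refine HasDerivAt.fun_sum fun i _ => HasDerivAt.const_mul _ ?_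
    have h := hasDerivAt_ray (s1 i) x u t
    simpa only [fun j => eq_of_xderiv_eq_zero (s2 i j) (hT i j) (t • x) u] using h
  have h := quadratic_of_hasDerivAt (p := fun t : ℝ => H (t • x, u))
    (fun t => hasDerivAt_ray hH x u t) hq 1
  simp only [one_smul, zero_smul, mul_one, one_pow] at h
  have hA : (∑ i, x i * ∑ j, x j * pderiv (xdir j) (pderiv (xdir i) H) (0, u)) / 2 =
      ∑ i, ∑ j, (pderiv udir (pderiv udir (pderiv (xdir j) (pderiv (xdir i) H))) (0, 0) / 4 * u ^ 2
        + pderiv udir (pderiv (xdir j) (pderiv (xdir i) H)) (0, 0) / 2 * u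
        + pderiv (xdir j) (pderiv (xdir i) H) (0, 0) / 2) * x i * x j := by
    rw [Finset.sum_div]
    refine Finset.sum_congr rfl fun i _ => ?_
    rw [Finset.mul_sum, Finset.sum_div]
    refine Finset.sum_congr rfl fun j _ => ?_
    rw [hquad i j u]
    ring
  rw [h, hA]
  simp only [mul_comm (x _) (pderiv _ _ _)]
  ring
end
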